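/- For all positive integers m and n, the generating function for column strict plane partitions P with 1 ≤ i ≤ n, 1 ≤ j ≤ m, 1 ≤ k ≤ n (i.e., P contained in the box {(i,j,k) : 1 ≤ i ≤ n, 1 ≤ j ≤ m, 1 ≤ k ≤ n}) is given by: ∑_P q^{|P|} = ∏_{1 ≤ i ≤ j ≤ n} (1 − q^{m+i+j−1})/(1 − q^{i+j−1}), as an identity in the formal power series ring ℚ[[q]], where each (1 − q^a)^{−1} denotes the inverse of the unit 1 − q^a. (The Bender–Knuth conjecture.) -/

import Mathlib

open scoped Classical

/-- A plane partition: a finite set of lattice points with positive integer coordinates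
that is downward closed. -/
def IsPlanePartition (P : Finset (ℕ × ℕ × ℕ)) : Prop :=
  (∀ p ∈ P, 1 ≤ p.1 ∧ 1 ≤ p.2.1 ∧ 1 ≤ p.2.2) ∧
    ∀ p ∈ P, ∀ i j k : ℕ,
      1 ≤ i → i ≤ p.1 → 1 ≤ j → j ≤ p.2.1 → 1 ≤ k → k ≤ p.2.2 → (i, j, k) ∈ P

/-- The height of stack `(i,j)`: the largest `k` with `(i,j,k) ∈ P` (0 if none). -/
def stackHeight (P : Finset (ℕ × ℕ × ℕ)) (i j : ℕ) : ℕ :=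
  (P.filter (fun p => p.1 = i ∧ p.2.1 = j)).sup (fun p => p.2.2)

/-- A plane partition is column strict if whenever `i ≥ 2` and `(i,j,1) ∈ P`, the height
of stack `(i,j)` is strictly less than the height of stack `(i-1,j)`. -/
def IsColumnStrict (P : Finset (ℕ × ℕ × ℕ)) : Prop :=
  ∀ i j : ℕ, 2 ≤ i → (i, j, 1) ∈ P → stackHeight P i j < stackHeight P (i - 1) j

/-- The box `B(n₁,n₂,m) = {(i,j,k) : 1 ≤ i ≤ n₁, 1 ≤ j ≤ n₂, 1 ≤ k ≤ m}` as a finset. -/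
def ppBox (n₁ n₂ m : ℕ) : Finset (ℕ × ℕ × ℕ) :=
  Finset.Icc 1 n₁ ×ˢ Finset.Icc 1 n₂ ×ˢ Finset.Icc 1 m

/-!
Removing the bottom layer of a column strict plane partition in the box with sides `n`, `m`, `n`
leaves one in the box with sides `n - 1`, `m`, `n - 1`, and the row lengths of the two bottom layers
interlace. The Schur polynomials at `(q, q², …, qⁿ)` satisfy the same recursion, so the partitions
with bottom layer `r` contribute `s_r(q, …, qⁿ)` and the generating function is the sum of these
over all `r` contained in the rectangle with `n` rows of length `m`.

By Macdonald's bounded form of Littlewood's identity, proved by induction on the number of variables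
and on the bound, this sum is a quotient of two determinants of type `B`. At `(q, …, qⁿ)` the
numerator reduces to a Vandermonde determinant and equals `∏ (1 - q ^ (m + i + j - 1))` up to a
factor independent of `m`. The case `m = 0`, where only the empty partition occurs, eliminates that
factor. The divisions are carried out in the fraction field of `ℤ[q]`, and the resulting polynomial
identity specializes to every commutative ring.
-/

section Alternants

open Finset Matrix Polynomial

variable {R K : Type*} [CommRing R] [Field K] {n : ℕ}

theorem prod_prod_Ioi_succAbove {M : Type*} [CommMonoid M] {f : Fin (n + 1) → Fin (n + 1) → M}
    (hf : ∀ i j, f i j = f j i) (k : Fin (n + 1)) :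
    ∏ i, ∏ j ∈ Ioi i, f i j =
      (∏ i, f k (k.succAbove i)) * ∏ i, ∏ j ∈ Ioi i, f (k.succAbove i) (k.succAbove j) := by
  have prod_Ioi_eq {m : ℕ} (g : Fin m → M) (i : Fin m) :
      ∏ j ∈ Ioi i, g j = ∏ j, if i < j then g j else 1 := by
    rw [← prod_filter, filter_lt_eq_Ioi]
  simp_rw [prod_Ioi_eq, Fin.prod_univ_succAbove _ k, Fin.succAbove_lt_succAbove_iff,
    prod_mul_distrib]
  rw [← mul_assoc, if_neg (lt_irrefl k), one_mul, ← prod_mul_distrib]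
  congr 1
  refine prod_congr rfl fun i _ => ?_
  rcases lt_or_gt_of_ne (Fin.succAbove_ne k i) with h | h
  · rw [if_neg h.not_gt, if_pos h, one_mul, hf]
  · rw [if_pos h, if_neg h.not_gt, mul_one]

/-- The alternant `a_l(x) = det (x_j ^ l_i)`. -/
def alternant (x : Fin n → R) (l : Fin n → ℕ) : R :=
  (of fun i j => x j ^ l i).det

theorem alternant_cons (x : Fin (n + 1) → R) (a : ℕ) (l : Fin n → ℕ) :
    alternant x (Fin.cons a l) =
      ∑ j : Fin (n + 1), (-1) ^ (j : ℕ) * x j ^ a * alternant (x ∘ j.succAbove) l :=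
  det_succ_row_zero _

/-- The numerator of the Weyl character formula of type `B`, with the powers `x_j ^ N` replaced by
free variables `t_j`: this makes it multilinear in `t`. -/
def weylNumerator (t x : Fin n → R) : R :=
  (of fun j i : Fin n => t j * x j ^ (i.rev : ℕ) - x j ^ (i : ℕ)).det

theorem weylNumerator_one (x : Fin (n + 1) → K) : weylNumerator 1 x = 0 := by
  rcases n with _ | n
  · simp [weylNumerator]
  refine exists_mulVec_eq_zero_iff.1 ⟨Pi.single 0 1 + Pi.single (Fin.last _) 1, fun h => ?_, ?_⟩
  · simpa [Fin.ext_iff] using congrFun h 0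
  · ext j
    simp [mulVec_add]

theorem det_eq_sum_weylNumerator {A : Matrix (Fin (n + 1)) (Fin (n + 1)) R}
    {t x d : Fin (n + 1) → R}
    (hA : ∀ j (i : Fin n), A j i.succ = d j * (t j * x j ^ (i.rev : ℕ) - x j ^ (i : ℕ))) :
    A.det = ∑ j : Fin (n + 1), (-1) ^ (j : ℕ) * (A j 0 * ∏ i, d (j.succAbove i)) *
      weylNumerator (t ∘ j.succAbove) (x ∘ j.succAbove) := by
  rw [det_succ_column_zero]
  refine sum_congr rfl fun j _ => ?_
  rw [weylNumerator, ← mul_assoc, mul_assoc (_ * _), ← det_mul_column]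
  congr 2
  ext k i
  exact hA _ _

theorem weylNumerator_mul (t x : Fin (n + 1) → R) :
    weylNumerator (t * x) x = ∑ j : Fin (n + 1), (-1) ^ (j : ℕ) *
      ((t j * x j ^ (n + 1) - 1) * ∏ i, x (j.succAbove i)) *
        weylNumerator (t ∘ j.succAbove) (x ∘ j.succAbove) := by
  rw [weylNumerator, det_eq_sum_weylNumerator (t := t) (x := x) (d := x)]
  · simp [mul_assoc, pow_succ']
  · intro j i
    simp only [of_apply, Pi.mul_apply, Fin.rev_succ, Fin.val_castSucc, Fin.val_succ]
    ring

/-- Adding to each column its predecessor makes `1 + x_j` a common factor of all columns but the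
first. -/
theorem weylNumerator_eq_sum (t x : Fin (n + 1) → R) :
    weylNumerator t x = ∑ j : Fin (n + 1), (-1) ^ (j : ℕ) *
      ((t j * x j ^ n - 1) * ∏ i, (1 + x (j.succAbove i))) *
        weylNumerator (t ∘ j.succAbove) (x ∘ j.succAbove) := by
  rw [weylNumerator, det_eq_of_forall_col_eq_smul_add_pred (B := of fun j => Fin.cons
      (t j * x j ^ n - 1) fun i : Fin n => (1 + x j) * (t j * x j ^ (i.rev : ℕ) - x j ^ (i : ℕ)))
      (fun _ => -1),
    det_eq_sum_weylNumerator (t := t) (x := x) (d := fun j => 1 + x j) (fun _ _ => rfl)]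
  · rfl
  · simp
  · intro j i
    simp only [of_apply, Fin.rev_succ, Fin.rev_castSucc, Fin.val_castSucc, Fin.val_succ,
      Fin.cons_succ]
    ring

theorem sum_sub_mul_weylNumerator_eq_zero (t x : Fin (n + 1) → R) (k : Fin n) :
    ∑ j : Fin (n + 1), (-1) ^ (j : ℕ) * (t j * x j ^ (k.rev : ℕ) - x j ^ (k : ℕ)) *
      weylNumerator (t ∘ j.succAbove) (x ∘ j.succAbove) = 0 := by
  have hA := det_eq_sum_weylNumerator (t := t) (x := x) (d := 1)
    (A := of fun j => Fin.cons (t j * x j ^ (k.rev : ℕ) - x j ^ (k : ℕ))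
      fun i : Fin n => t j * x j ^ (i.rev : ℕ) - x j ^ (i : ℕ)) (by simp)
  rw [det_zero_of_column_eq (Fin.succ_ne_zero k).symm (by simp)] at hA
  simpa using hA.symm

theorem exists_add_one_mul_eval_eq [Nontrivial R] (x : Fin (n + 1) → R) :
    ∃ Q : R[X], Q.natDegree < n + 1 ∧ Q.coeff n = ∏ i, x i ∧
      ∀ y, (y + 1) * Q.eval y = (∏ i, (1 + x i)) * y ^ n + ∏ i, (x i * y - 1) := by
  set G : R[X] := C (∏ i, (1 + x i)) * X ^ n + ∏ i, (C (x i) * X - 1) with hG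
  have hGeval (y : R) : G.eval y = (∏ i, (1 + x i)) * y ^ n + ∏ i, (x i * y - 1) := by
    simp [hG, eval_prod]
  have hdeg (i) : (C (x i) * X - 1 : R[X]).natDegree ≤ 1 := by compute_degree
  have hGdeg : G.natDegree ≤ n + 1 := by
    refine natDegree_add_le_of_degree_le ((natDegree_C_mul_X_pow_le _ _).trans n.le_succ) ?_
    exact (natDegree_prod_le _ _).trans ((sum_le_card_nsmul _ _ 1 fun i _ => hdeg i).trans
      (by simp))
  have hGcoeff : G.coeff (n + 1) = ∏ i, x i := by
    have h := coeff_prod_of_natDegree_le (s := univ) (fun i => C (x i) * X - 1) 1 fun i _ => hdeg i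
    simp only [card_univ, Fintype.card_fin, mul_one] at h
    rw [hG, coeff_add, coeff_C_mul_X_pow, if_neg n.succ_ne_self, zero_add, h]
    simp [coeff_one]
  have hroot : G.IsRoot (-1) := by
    have h : ∏ i, (x i * -1 - 1) = (-1) ^ (n + 1) * ∏ i, (1 + x i) := by
      rw [← Fin.prod_const, ← prod_mul_distrib]
      exact prod_congr rfl fun i _ => by ring
    rw [IsRoot.def, hGeval, h]
    ring
  have hQ : (X - C (-1)) * (G /ₘ (X - C (-1))) = G := mul_divByMonic_eq_iff_isRoot.2 hroot
  have hQdeg : (G /ₘ (X - C (-1))).natDegree < n + 1 := by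
    rw [natDegree_divByMonic _ (monic_X_sub_C _), natDegree_X_sub_C]
    omega
  refine ⟨G /ₘ (X - C (-1)), hQdeg, ?_, fun y => ?_⟩
  · rw [← hGcoeff, ← congrArg (coeff · (n + 1)) hQ, sub_mul, coeff_sub, coeff_X_mul, coeff_C_mul,
      coeff_eq_zero_of_natDegree_lt hQdeg, mul_zero, sub_zero]
  · rw [← hGeval, ← congrArg (eval y) hQ]
    simp

theorem exists_coeff_mul_sum_pow_rev (x : Fin (n + 1) → R) :
    ∃ c : Fin n → R, ∀ y, (1 + y) * ∑ k, c k * y ^ (k.rev : ℕ) =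
      (1 + y) * (∏ i, x i) * y ^ n - (∏ i, (1 + x i)) * y ^ n - ∏ i, (x i * y - 1) := by
  nontriviality R
  obtain ⟨Q, hdeg, hcoeff, heval⟩ := exists_add_one_mul_eval_eq x
  refine ⟨fun k => -Q.coeff k.rev, fun y => ?_⟩
  have hsum : ∑ k : Fin n, -Q.coeff k.rev * y ^ (k.rev : ℕ) = (∏ i, x i) * y ^ n - Q.eval y := by
    refine (Equiv.sum_comp Fin.revPerm fun k : Fin n => -Q.coeff k * y ^ (k : ℕ)).trans ?_
    rw [Fin.sum_univ_eq_sum_range fun k => -Q.coeff k * y ^ k, eval_eq_sum_range' hdeg,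
      sum_range_succ, hcoeff]
    simp
  rw [hsum]
  linear_combination -heval y

theorem exists_coeff_sum_pow (x : Fin (n + 1) → K) (hx : ∀ i, x i ≠ 0) (hx' : ∀ i, 1 + x i ≠ 0) :
    ∃ c : Fin n → K, ∀ j,
      ∑ k, c k * x j ^ (k.rev : ℕ) = (∏ i, x (j.succAbove i)) * x j ^ (n + 1) -
        (∏ i, (1 + x (j.succAbove i))) * x j ^ n -
          (x j - 1) * ∏ i, (x j * x (j.succAbove i) - 1) ∧
      ∑ k, c k * x j ^ (k : ℕ) = ∏ i, x (j.succAbove i) - ∏ i, (1 + x (j.succAbove i)) := by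
  obtain ⟨c, hc⟩ := exists_coeff_mul_sum_pow_rev x
  refine ⟨c, fun j => ⟨mul_left_cancel₀ (hx' j) ?_, mul_left_cancel₀ (hx' j) ?_⟩⟩
  · rw [hc]
    simp_rw [Fin.prod_univ_succAbove _ j, mul_comm _ (x j)]
    ring
  · have hinv : ∑ k, c k * x j ^ (k : ℕ) =
        x j ^ n * (x j)⁻¹ * ∑ k, c k * (x j)⁻¹ ^ (k.rev : ℕ) := by
      rw [mul_sum]
      refine sum_congr rfl fun k _ => ?_
      have hn : x j ^ n = x j ^ (k : ℕ) * x j ^ (k.rev : ℕ) * x j := by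
        rw [← pow_add, ← pow_succ, Fin.val_rev]
        congr
        omega
      rw [hn, inv_pow]
      field [hx j]
    have hprod : ∏ i, (x i * (x j)⁻¹ - 1) = 0 :=
      prod_eq_zero (mem_univ j) (by rw [mul_inv_cancel₀ (hx j), sub_self])
    have hcj := hc (x j)⁻¹
    rw [hprod, sub_zero, Fin.prod_univ_succAbove x j, Fin.prod_univ_succAbove _ j] at hcj
    have hxn : x j ^ n * (x j)⁻¹ ^ n = 1 := by rw [← mul_pow, mul_inv_cancel₀ (hx j), one_pow]
    have hxx := mul_inv_cancel₀ (hx j)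
    rw [hinv]
    set X := ∏ i, x (j.succAbove i)
    set Y := ∏ i, (1 + x (j.succAbove i))
    set S := ∑ k, c k * (x j)⁻¹ ^ (k.rev : ℕ)
    linear_combination x j ^ n * hcj + (x j ^ n * S + X) * hxx +
      ((1 + (x j)⁻¹) * x j * X - (1 + x j) * Y) * hxn

/-- By `exists_coeff_sum_pow`, the two sides differ by a linear combination of the determinants with
a repeated column in `sum_sub_mul_weylNumerator_eq_zero`. -/
theorem weylNumerator_mul_sub {x : Fin (n + 1) → K} (hx : ∀ i, x i ≠ 0) (hx' : ∀ i, 1 + x i ≠ 0)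
    (t : Fin (n + 1) → K) :
    weylNumerator (t * x) x - weylNumerator t x =
      ∑ j : Fin (n + 1), (-1) ^ (j : ℕ) * t j * ((x j - 1) * ∏ i, (x j * x (j.succAbove i) - 1)) *
        weylNumerator (t ∘ j.succAbove) (x ∘ j.succAbove) := by
  obtain ⟨c, hc⟩ := exists_coeff_sum_pow x hx hx'
  rw [weylNumerator_mul, weylNumerator_eq_sum, ← sum_sub_distrib, ← sub_eq_zero,
    ← sum_sub_distrib]
  calc
    _ = ∑ j : Fin (n + 1), ∑ k, c k * ((-1) ^ (j : ℕ) * (t j * x j ^ (k.rev : ℕ) - x j ^ (k : ℕ)) *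
          weylNumerator (t ∘ j.succAbove) (x ∘ j.succAbove)) := by
      refine sum_congr rfl fun j _ => ?_
      have hsplit : ∑ k, c k * (t j * x j ^ (k.rev : ℕ) - x j ^ (k : ℕ)) =
          t j * ∑ k, c k * x j ^ (k.rev : ℕ) - ∑ k, c k * x j ^ (k : ℕ) := by
        rw [mul_sum, ← sum_sub_distrib]
        exact sum_congr rfl fun k _ => by ring
      trans (-1) ^ (j : ℕ) * (∑ k, c k * (t j * x j ^ (k.rev : ℕ) - x j ^ (k : ℕ))) *
        weylNumerator (t ∘ j.succAbove) (x ∘ j.succAbove)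
      · rw [hsplit, (hc j).1, (hc j).2]
        ring
      · rw [mul_sum, sum_mul]
        exact sum_congr rfl fun k _ => by ring
    _ = ∑ k, c k * ∑ j : Fin (n + 1), (-1) ^ (j : ℕ) * (t j * x j ^ (k.rev : ℕ) - x j ^ (k : ℕ)) *
          weylNumerator (t ∘ j.succAbove) (x ∘ j.succAbove) := by
      rw [sum_comm]
      simp_rw [mul_sum]
    _ = 0 := by simp_rw [sum_sub_mul_weylNumerator_eq_zero, mul_zero, sum_const_zero]

/-- Strictly decreasing sequences of length `n` with entries below `N`. -/
def strictSeqs (n N : ℕ) : Finset (Fin n → ℕ) :=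
  (Fintype.piFinset fun _ => range N).filter StrictAnti

theorem mem_strictSeqs {N : ℕ} {l : Fin n → ℕ} :
    l ∈ strictSeqs n N ↔ (∀ i, l i < N) ∧ StrictAnti l := by
  simp [strictSeqs]

theorem strictAnti_cons {α : Type*} [Preorder α] {f : Fin n → α} {a : α} :
    StrictAnti (Fin.cons a f : Fin (n + 1) → α) ↔ (∀ i, f i < a) ∧ StrictAnti f :=
  Fin.strictMono_cons (α := αᵒᵈ)

theorem sum_strictSeqs_succ {M : Type*} [AddCommMonoid M] (N : ℕ) (F : (Fin (n + 1) → ℕ) → M) :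
    ∑ l ∈ strictSeqs (n + 1) N, F l =
      ∑ a ∈ range N, ∑ l ∈ strictSeqs n a, F (Fin.cons a l) := by
  have cons_mem (a : ℕ) (l : Fin n → ℕ) :
      Fin.cons a l ∈ strictSeqs (n + 1) N ↔ a < N ∧ l ∈ strictSeqs n a := by
    simp only [mem_strictSeqs, strictAnti_cons, Fin.forall_fin_succ, Fin.cons_zero, Fin.cons_succ]
    exact ⟨fun h => ⟨h.1.1, h.2⟩, fun h => ⟨⟨h.1, fun i => (h.2.1 i).trans h.1⟩, h.2⟩⟩
  rw [sum_sigma']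
  refine (sum_bij' (fun p _ => Fin.cons p.1 p.2) (fun l _ => ⟨l 0, Fin.tail l⟩) ?_ ?_ ?_ ?_ ?_).symm
  · rintro ⟨a, l⟩ h
    rwa [cons_mem, ← mem_range, ← mem_sigma (a := (⟨a, l⟩ : (_ : ℕ) × (Fin n → ℕ)))]
  · intro l h
    rwa [mem_sigma, mem_range, ← cons_mem, Fin.cons_self_tail]
  · exact fun p _ => rfl
  · exact fun l _ => Fin.cons_self_tail l
  · exact fun p _ => rfl

/-- The sum of the maximal minors of the `N × n` matrix of powers of the `x j`. -/
def minorSum (x : Fin n → R) (N : ℕ) : R :=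
  ∑ l ∈ strictSeqs n N, alternant x l

theorem minorSum_succ (x : Fin (n + 1) → R) (N : ℕ) :
    minorSum x (N + 1) = minorSum x N +
      ∑ j : Fin (n + 1), (-1) ^ (j : ℕ) * x j ^ N * minorSum (x ∘ j.succAbove) N := by
  simp_rw [minorSum, sum_strictSeqs_succ, sum_range_succ, alternant_cons, mul_sum]
  rw [sum_comm (s := univ)]

/-- The Weyl denominator of type `B` without its Vandermonde factor. -/
def littlewoodDenominator (x : Fin n → R) : R :=
  (∏ i, (x i - 1)) * ∏ i, ∏ j ∈ Ioi i, (x i * x j - 1)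

theorem littlewoodDenominator_succAbove (x : Fin (n + 1) → R) (k : Fin (n + 1)) :
    littlewoodDenominator x = ((x k - 1) * ∏ i, (x k * x (k.succAbove i) - 1)) *
      littlewoodDenominator (x ∘ k.succAbove) := by
  rw [littlewoodDenominator, Fin.prod_univ_succAbove _ k,
    prod_prod_Ioi_succAbove (fun i j => by rw [mul_comm]) k, littlewoodDenominator]
  simp only [Function.comp_apply]
  ring

/-- Bounded form of Littlewood's identity `∑_λ s_λ = ∏ (1 - x_i)⁻¹ ∏_{i < j} (1 - x_i x_j)⁻¹`. -/
theorem minorSum_mul_littlewoodDenominator {x : Fin n → K} (hx : ∀ i, x i ≠ 0)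
    (hx' : ∀ i, 1 + x i ≠ 0) (N : ℕ) :
    minorSum x N * littlewoodDenominator x = weylNumerator (x ^ N) x := by
  induction n generalizing N with
  | zero =>
    have hseqs : strictSeqs 0 N = univ := by
      ext l
      simp only [mem_strictSeqs, IsEmpty.forall_iff, Subsingleton.strictAnti, and_self, mem_univ]
    simp [minorSum, littlewoodDenominator, weylNumerator, alternant, hseqs]
  | succ n ih =>
    induction N with
    | zero => rw [minorSum, sum_strictSeqs_succ, range_zero, sum_empty, zero_mul, pow_zero,
        weylNumerator_one]
    | succ N ihN =>
      rw [pow_succ, eq_add_of_sub_eq (weylNumerator_mul_sub hx hx' (x ^ N)), ← ihN, minorSum_succ,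
        add_mul, add_comm, sum_mul]
      congr 1
      refine sum_congr rfl fun j _ => ?_
      have ihj := ih (x := x ∘ j.succAbove) (fun i => hx _) (fun i => hx' _) N
      rw [show (x ^ N) ∘ j.succAbove = (x ∘ j.succAbove) ^ N from rfl, ← ihj,
        littlewoodDenominator_succAbove x j, Pi.pow_apply]
      ring

end Alternants

section PrincipalSpecialization

open Finset Matrix Polynomial

variable {R : Type*} [CommRing R] {n : ℕ}

theorem isMonicOfDegree_dickson_two [Nontrivial R] (c : R) (j : ℕ) :
    IsMonicOfDegree (dickson 2 c j) j := by
  induction j using Nat.twoStepInduction with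
  | zero => simpa using show (3 - 2 : R[X]) = 1 by norm_num
  | one => simpa using isMonicOfDegree_X R
  | more j ih₁ ih₂ =>
    rw [dickson_add_two, show j + 2 = 1 + (j + 1) by ring]
    refine ((isMonicOfDegree_X R).mul ih₂).sub ((natDegree_C_mul_le _ _).trans_lt ?_)
    rw [ih₁.natDegree_eq]
    omega

theorem sub_mul_eval_dickson_two (a b : R) (j : ℕ) :
    (a - b) * (dickson 2 (a * b) j).eval (a + b) = a ^ (j + 1) - b ^ (j + 1) := by
  induction j using Nat.twoStepInduction with
  | zero => simp [show (3 - 2 : R) = 1 by norm_num]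
  | one =>
    rw [dickson_one, eval_X]
    ring
  | more j ih₁ ih₂ =>
    simp only [dickson_add_two, eval_sub, eval_mul, eval_X, eval_C]
    linear_combination (a + b) * ih₂ - a * b * ih₁

/-- The principal specialization point `(q, q², …, qⁿ)`. -/
def principalPoint (q : R) (n : ℕ) (j : Fin n) : R :=
  q ^ (j + 1 : ℕ)

/-- The product of `1 - q ^ (m + i + j - 1)` over `1 ≤ i ≤ j ≤ n`, indexed from zero. -/
def pairProd (q : R) (n m : ℕ) : R :=
  ∏ i : Fin n, ∏ j ∈ Ici i, (1 - q ^ (m + i + j + 1))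

/-- Determinants of odd-orthogonal type reduce to Vandermonde determinants because
`(a ^ (j + 1) - b ^ (j + 1)) / (a - b)` is a monic polynomial of degree `j` in `a + b` once `a * b`
is fixed. -/
theorem det_pow_sub_pow_eq {a b : Fin n → R} {c : R} (hab : ∀ i, a i * b i = c) :
    (of fun i j : Fin n => a i ^ (j + 1 : ℕ) - b i ^ (j + 1 : ℕ)).det =
      (∏ i, (a i - b i)) * ∏ i, ∏ j ∈ Ioi i, (a j + b j - (a i + b i)) := by
  nontriviality R
  rw [← det_vandermonde fun i => a i + b i, det_eval_matrixOfPolynomials_eq_det_vandermonde _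
    (fun j : Fin n => dickson 2 c j) (fun j => (isMonicOfDegree_dickson_two c j).natDegree_eq)
    (fun j => (isMonicOfDegree_dickson_two c j).monic), ← det_mul_column]
  congr 1
  ext i j
  simp only [of_apply, ← hab i, sub_mul_eval_dickson_two]

theorem weylNumerator_principalPoint_pow (q : R) (n m : ℕ) :
    weylNumerator (principalPoint q n ^ (m + n)) (principalPoint q n) =
      (Equiv.Perm.sign (Fin.revPerm (n := n)) : ℤ) *
        ((∏ i : Fin n, (q ^ (m + n + i) - q ^ (i.rev : ℕ))) * ∏ i : Fin n, ∏ j ∈ Ioi i,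
          (q ^ (m + n + j) + q ^ (j.rev : ℕ) - (q ^ (m + n + i) + q ^ (i.rev : ℕ)))) := by
  have hconst (i : Fin n) : q ^ (m + n + i) * q ^ (i.rev : ℕ) = q ^ (m + 2 * n - 1) := by
    rw [← pow_add, Fin.val_rev]
    congr 1
    omega
  rw [← det_pow_sub_pow_eq hconst, ← det_transpose (of _), ← det_permute', weylNumerator]
  congr 1
  ext j i
  simp only [principalPoint, submatrix_apply, transpose_apply, of_apply, Fin.revPerm_apply,
    Fin.rev_rev, id_eq, Pi.pow_apply]
  ring

theorem exists_weylNumerator_principalPoint_eq_mul (q : R) (n : ℕ) :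
    ∃ c, ∀ m, weylNumerator (principalPoint q n ^ (m + n)) (principalPoint q n) =
      c * pairProd q n m := by
  refine ⟨(Equiv.Perm.sign (Fin.revPerm (n := n)) : ℤ) * ((∏ i : Fin n, -q ^ (i.rev : ℕ)) *
    ∏ i : Fin n, ∏ j ∈ Ioi i, (q ^ (j.rev : ℕ) - q ^ (i.rev : ℕ))), fun m => ?_⟩
  have hshift (i j : Fin n) : q ^ (m + n + i) = q ^ (j.rev : ℕ) * q ^ (m + i + j + 1) := by
    rw [← pow_add, Fin.val_rev]
    congr 1
    omega
  have hdiag : ∏ i : Fin n, (q ^ (m + n + i) - q ^ (i.rev : ℕ)) =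
      (∏ i : Fin n, -q ^ (i.rev : ℕ)) * ∏ i : Fin n, (1 - q ^ (m + i + i + 1)) := by
    rw [← prod_mul_distrib]
    refine prod_congr rfl fun i _ => ?_
    rw [hshift i i]
    ring
  have hoffdiag : ∏ i : Fin n, ∏ j ∈ Ioi i,
      (q ^ (m + n + j) + q ^ (j.rev : ℕ) - (q ^ (m + n + i) + q ^ (i.rev : ℕ))) =
        (∏ i : Fin n, ∏ j ∈ Ioi i, (q ^ (j.rev : ℕ) - q ^ (i.rev : ℕ))) *
          ∏ i : Fin n, ∏ j ∈ Ioi i, (1 - q ^ (m + i + j + 1)) := by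
    simp_rw [← prod_mul_distrib]
    refine prod_congr rfl fun i _ => prod_congr rfl fun j _ => ?_
    rw [hshift i j, hshift j i, add_right_comm m]
    ring
  simp_rw [weylNumerator_principalPoint_pow, hdiag, hoffdiag, pairProd,
    ← mul_prod_Ioi_eq_prod_Ici, prod_mul_distrib]
  ring

end PrincipalSpecialization

section Branching

open Finset Matrix

variable {R : Type*} [CommRing R] {n : ℕ}

/-- The strictly decreasing sequence `r_i + n - i` attached to a partition `r` with at most `n`
parts. -/
def addStaircase (r : Fin n → ℕ) (i : Fin n) : ℕ :=
  r i + i.rev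

theorem det_sum_piFinset (f : Fin n → ℕ → Fin n → R) (s : Fin n → Finset ℕ) :
    ∑ k ∈ Fintype.piFinset s, (of fun i => f i (k i)).det = (of fun i => ∑ k ∈ s i, f i k).det :=
  (detRowAlternating.toMultilinearMap.map_sum_finset f s).symm

/-- Once the factors `q ^ l_i` are pulled out of the rows, the first column is constant. -/
theorem alternant_principalPoint_succ (q : R) (l : Fin (n + 1) → ℕ) :
    alternant (principalPoint q (n + 1)) l = (∏ i, q ^ l i) * (of fun i j : Fin n =>
      principalPoint q n j ^ l i.succ - principalPoint q n j ^ l i.castSucc).det := by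
  have hfactor : alternant (principalPoint q (n + 1)) l =
      (∏ i, q ^ l i) * (of fun i j : Fin (n + 1) => (q ^ (j : ℕ)) ^ l i).det := by
    rw [← det_mul_column, alternant]
    congr 1
    ext i j
    simp only [principalPoint, of_apply]
    rw [pow_succ, mul_pow, mul_comm]
  rw [hfactor, det_eq_of_forall_row_eq_smul_add_pred (fun _ => 1)
    (B := of fun i j : Fin (n + 1) => Fin.cases ((q ^ (j : ℕ)) ^ l 0)
      (fun i => (q ^ (j : ℕ)) ^ l i.succ - (q ^ (j : ℕ)) ^ l i.castSucc) i) (by simp) (by simp),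
    det_succ_column_zero, Fin.sum_univ_succ]
  simp only [of_apply, Fin.cases_zero, Fin.cases_succ, Fin.val_zero, pow_zero, one_pow, sub_self,
    mul_zero, zero_mul, sum_const_zero, add_zero, one_mul]
  rfl

/-- The branching rule for Schur functions, principally specialized. -/
theorem sum_alternant_interlacing (q : R) {r : Fin (n + 1) → ℕ} (hr : Antitone r) :
    (∑ k ∈ Fintype.piFinset fun i : Fin n => Icc (r i.succ) (r i.castSucc),
        alternant (principalPoint q n) (addStaircase k)) *
      ((∏ i, q ^ addStaircase r i) * ∏ j : Fin n, (1 - q ^ (j + 1 : ℕ))) =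
    alternant (principalPoint q (n + 1)) (addStaircase r) := by
  have hgeom (x : R) (i : Fin n) :
      (1 - x) * ∑ k ∈ Icc (r i.succ) (r i.castSucc), x ^ (k + i.rev : ℕ) =
        x ^ addStaircase r i.succ - x ^ addStaircase r i.castSucc := by
    have h := geom_sum_Ico_mul x ((hr (Fin.castSucc_le_succ i)).trans (Nat.le_succ _))
    simp only [addStaircase, Fin.rev_succ, Fin.rev_castSucc, Fin.val_castSucc, Fin.val_succ,
      pow_add, ← sum_mul, Nat.succ_eq_add_one, Ico_add_one_right_eq_Icc] at h ⊢
    linear_combination -x ^ (i.rev : ℕ) * h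
  have hsum := det_sum_piFinset (fun (i : Fin n) k j => principalPoint q n j ^ (k + i.rev : ℕ))
    fun i => Icc (r i.succ) (r i.castSucc)
  rw [alternant_principalPoint_succ, mul_left_comm, mul_comm (∑ _ ∈ _, _)]
  congr 1
  refine (congrArg _ hsum).trans ?_
  rw [← det_mul_row]
  congr 1
  ext i j
  simp only [of_apply, Finset.sum_apply, ← hgeom]
  rfl

end Branching

section PlanePartitions

open Finset

variable {n m : ℕ} {P : Finset (ℕ × ℕ × ℕ)}

theorem IsPlanePartition.mem_iff_le_stackHeight (hP : IsPlanePartition P) {i j k : ℕ}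
    (hi : 1 ≤ i) (hj : 1 ≤ j) (hk : 1 ≤ k) : (i, j, k) ∈ P ↔ k ≤ stackHeight P i j := by
  rw [stackHeight]
  refine ⟨fun h => le_sup (f := fun p : ℕ × ℕ × ℕ => p.2.2) (b := (i, j, k)) (by simpa using h),
    fun h => ?_⟩
  obtain ⟨⟨a, b, c⟩, habc, hc⟩ := (Finset.le_sup_iff (show (⊥ : ℕ) < k from hk)).1 h
  obtain ⟨hmem, rfl, rfl⟩ := mem_filter.1 habc
  exact hP.2 _ hmem _ _ _ hi le_rfl hj le_rfl hk hc

theorem IsPlanePartition.isColumnStrict_iff (hP : IsPlanePartition P) :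
    IsColumnStrict P ↔ ∀ i j k, 1 ≤ i → (i + 1, j, k) ∈ P → (i, j, k + 1) ∈ P := by
  constructor
  · intro h i j k hi hmem
    obtain ⟨-, hj, hk⟩ : 1 ≤ i + 1 ∧ 1 ≤ j ∧ 1 ≤ k := hP.1 _ hmem
    have hlt : stackHeight P (i + 1) j < stackHeight P i j :=
      h (i + 1) j (by omega) (hP.2 _ hmem _ _ _ (by omega) le_rfl hj le_rfl le_rfl hk)
    rw [hP.mem_iff_le_stackHeight (by omega) hj hk] at hmem
    exact (hP.mem_iff_le_stackHeight hi hj (by omega)).2 (by omega)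
  · intro h i j hi hmem
    obtain ⟨i, rfl⟩ := Nat.exists_eq_add_of_le' (by omega : 1 ≤ i)
    have hj : 1 ≤ j := (hP.1 _ hmem).2.1
    have hpos := (hP.mem_iff_le_stackHeight (by omega) hj le_rfl).1 hmem
    have htop := (hP.mem_iff_le_stackHeight (by omega) hj hpos).2 le_rfl
    exact (hP.mem_iff_le_stackHeight (by omega) hj (by omega)).1 (h i j _ (by omega) htop)

/-- Column strict plane partitions in the box with sides `n`, `m`, `n`, described pointwise. -/
structure IsBoxed (n m : ℕ) (P : Finset (ℕ × ℕ × ℕ)) : Prop where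
  mem_box : ∀ i j k, (i, j, k) ∈ P → (1 ≤ i ∧ i ≤ n) ∧ (1 ≤ j ∧ j ≤ m) ∧ (1 ≤ k ∧ k ≤ n)
  down : ∀ i j k, (i, j, k) ∈ P → ∀ i' j' k',
    1 ≤ i' → i' ≤ i → 1 ≤ j' → j' ≤ j → 1 ≤ k' → k' ≤ k → (i', j', k') ∈ P
  strict : ∀ i j k, 1 ≤ i → (i + 1, j, k) ∈ P → (i, j, k + 1) ∈ P

/-- The finset of column strict plane partitions in the box with sides `n`, `m`, `n`. -/
noncomputable def boxedPartitions (n m : ℕ) : Finset (Finset (ℕ × ℕ × ℕ)) :=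
  (ppBox n m n).powerset.filter fun P => IsPlanePartition P ∧ IsColumnStrict P

theorem mem_boxedPartitions : P ∈ boxedPartitions n m ↔ IsBoxed n m P := by
  simp only [boxedPartitions, mem_filter, mem_powerset, subset_iff, Prod.forall, ppBox,
    mem_product, mem_Icc]
  refine ⟨fun ⟨hbox, hP, hs⟩ => ⟨hbox, fun i j k => hP.2 (i, j, k), hP.isColumnStrict_iff.1 hs⟩,
    fun h => ?_⟩
  have hP : IsPlanePartition P :=
    ⟨fun p hp => (h.mem_box _ _ _ hp).imp And.left (.imp And.left And.left),
      fun p => h.down p.1 p.2.1 p.2.2⟩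
  exact ⟨h.mem_box, hP, hP.isColumnStrict_iff.2 h.strict⟩

/-- The row lengths of the bottom layer of `P`; row `i : Fin n` is the one with first
coordinate `i + 1`. -/
def bottomRow (n : ℕ) (P : Finset (ℕ × ℕ × ℕ)) (i : Fin n) : ℕ :=
  (P.filter fun p => p.1 = (i : ℕ) + 1 ∧ p.2.2 = 1).sup fun p => p.2.1

/-- The translation by one in the vertical direction. -/
def raise : ℕ × ℕ × ℕ ↪ ℕ × ℕ × ℕ where
  toFun p := (p.1, p.2.1, p.2.2 + 1)
  inj' := fun ⟨_, _, _⟩ ⟨_, _, _⟩ h => by simpa using h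

theorem raise_apply (p : ℕ × ℕ × ℕ) : raise p = (p.1, p.2.1, p.2.2 + 1) :=
  rfl

/-- Removes the bottom layer and lowers the rest by one. -/
noncomputable def removeBottom (P : Finset (ℕ × ℕ × ℕ)) : Finset (ℕ × ℕ × ℕ) :=
  (P.preimage raise raise.injective.injOn).filter fun p => 1 ≤ p.2.2

/-- The bottom layer with row lengths `r`. -/
def flatLayer (r : Fin n → ℕ) : Finset (ℕ × ℕ × ℕ) :=
  (univ.sigma fun i => Icc 1 (r i)).image fun p => ((p.1 : ℕ) + 1, p.2, 1)

/-- Puts `P`, raised by one, on top of a bottom layer with row lengths `r`. -/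
noncomputable def addBottom (r : Fin n → ℕ) (P : Finset (ℕ × ℕ × ℕ)) : Finset (ℕ × ℕ × ℕ) :=
  flatLayer r ∪ P.map raise

theorem mem_removeBottom {i j k : ℕ} : (i, j, k) ∈ removeBottom P ↔ (i, j, k + 1) ∈ P ∧ 1 ≤ k := by
  simp [removeBottom, raise_apply]

theorem mem_flatLayer {r : Fin n → ℕ} {a j k : ℕ} :
    (a, j, k) ∈ flatLayer r ↔ ∃ i : Fin n, a = i + 1 ∧ (1 ≤ j ∧ j ≤ r i) ∧ k = 1 := by
  simp only [flatLayer, mem_image, mem_sigma, mem_univ, mem_Icc, true_and, Sigma.exists,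
    Prod.mk.injEq]
  exact ⟨fun ⟨i, _, hj, ha, hb, hk⟩ => ⟨i, ha.symm, hb ▸ hj, hk.symm⟩,
    fun ⟨i, ha, hj, hk⟩ => ⟨i, j, hj, ha.symm, rfl, hk.symm⟩⟩

theorem mem_addBottom {r : Fin n → ℕ} {a j k : ℕ} :
    (a, j, k) ∈ addBottom r P ↔ (∃ i : Fin n, a = i + 1 ∧ (1 ≤ j ∧ j ≤ r i) ∧ k = 1) ∨
      ∃ k', (a, j, k') ∈ P ∧ k = k' + 1 := by
  rw [addBottom, mem_union, mem_flatLayer]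
  simp [raise_apply, eq_comm]

theorem card_flatLayer (r : Fin n → ℕ) : (flatLayer r).card = ∑ i, r i := by
  rw [flatLayer, card_image_of_injective, card_sigma]
  · simp
  · rintro ⟨i, j⟩ ⟨i', j'⟩ h
    simpa [Fin.ext_iff] using h

theorem le_bottomRow {i : Fin n} {j : ℕ} (h : ((i : ℕ) + 1, j, 1) ∈ P) : j ≤ bottomRow n P i :=
  le_sup (f := fun p : ℕ × ℕ × ℕ => p.2.1) (b := ((i : ℕ) + 1, j, 1)) (by simpa using h)

namespace IsBoxed

theorem mem_iff_le_bottomRow (hP : IsBoxed n m P) {i : Fin n} {j : ℕ} (hj : 1 ≤ j) :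
    ((i : ℕ) + 1, j, 1) ∈ P ↔ j ≤ bottomRow n P i := by
  refine ⟨le_bottomRow, fun h => ?_⟩
  obtain ⟨⟨a, b, c⟩, habc, hb⟩ := (Finset.le_sup_iff (show (⊥ : ℕ) < j from hj)).1 h
  obtain ⟨hmem, rfl, rfl⟩ := mem_filter.1 habc
  exact hP.down _ _ _ hmem _ _ _ (by omega) le_rfl hj hb le_rfl le_rfl

theorem bottomRow_le_iff (hP : IsBoxed n m P) {i : Fin n} {a : ℕ} :
    bottomRow n P i ≤ a ↔ ∀ j, ((i : ℕ) + 1, j, 1) ∈ P → j ≤ a := by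
  refine ⟨fun h j hj => (le_bottomRow hj).trans h, fun h => ?_⟩
  rcases Nat.eq_zero_or_pos (bottomRow n P i) with h0 | hpos
  · omega
  · exact h _ ((hP.mem_iff_le_bottomRow hpos).2 le_rfl)

theorem bottomRow_le (hP : IsBoxed n m P) (i : Fin n) : bottomRow n P i ≤ m :=
  hP.bottomRow_le_iff.2 fun _ h => (hP.mem_box _ _ _ h).2.1.2

theorem bottomRow_antitone (hP : IsBoxed n m P) : Antitone (bottomRow n P) := by
  refine fun i i' hi => hP.bottomRow_le_iff.2 fun j h => le_bottomRow ?_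
  have hj := (hP.mem_box _ _ _ h).2.1.1
  exact hP.down _ _ _ h _ _ _ (by omega) (by simpa using hi) hj le_rfl le_rfl le_rfl

theorem add_le (hP : IsBoxed n m P) {i j k : ℕ} (h : (i, j, k) ∈ P) : i + k ≤ n + 1 := by
  have hi := (hP.mem_box _ _ _ h).1.1
  induction i, hi using Nat.le_induction generalizing k with
  | base =>
    have := hP.mem_box _ _ _ h
    omega
  | succ i hi ih =>
    have := ih (hP.strict _ _ _ hi h)
    omega

protected theorem removeBottom (hP : IsBoxed (n + 1) m P) : IsBoxed n m (removeBottom P) where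
  mem_box i j k h := by
    rw [mem_removeBottom] at h
    have := hP.mem_box _ _ _ h.1
    have := hP.add_le h.1
    omega
  down i j k h i' j' k' hi hi' hj hj' hk hk' := by
    rw [mem_removeBottom] at h ⊢
    exact ⟨hP.down _ _ _ h.1 _ _ _ hi hi' hj hj' (by omega) (by omega), hk⟩
  strict i j k hi h := by
    rw [mem_removeBottom] at h ⊢
    exact ⟨hP.strict _ _ _ hi h.1, by omega⟩

theorem bottomRow_removeBottom_mem_Icc (hP : IsBoxed (n + 1) m P) (i : Fin n) :
    bottomRow n (removeBottom P) i ∈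
      Icc (bottomRow (n + 1) P i.succ) (bottomRow (n + 1) P i.castSucc) := by
  rw [mem_Icc, hP.bottomRow_le_iff, hP.removeBottom.bottomRow_le_iff]
  refine ⟨fun j h => le_bottomRow (mem_removeBottom.2 ⟨?_, le_rfl⟩), fun j h => le_bottomRow ?_⟩
  · exact hP.strict _ _ _ (by omega) (by simpa using h)
  · have hmem := (mem_removeBottom.1 h).1
    have hj := (hP.mem_box _ _ _ hmem).2.1.1
    exact hP.down _ _ _ hmem _ _ _ (by omega) le_rfl hj le_rfl le_rfl (by omega)

theorem addBottom_removeBottom (hP : IsBoxed n m P) :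
    addBottom (bottomRow n P) (removeBottom P) = P := by
  ext ⟨a, j, k⟩
  simp only [mem_addBottom, mem_removeBottom]
  constructor
  · rintro (⟨i, rfl, ⟨hj, hj'⟩, rfl⟩ | ⟨k, ⟨h, -⟩, rfl⟩)
    · exact (hP.mem_iff_le_bottomRow hj).2 hj'
    · exact h
  · intro h
    obtain ⟨⟨ha, han⟩, ⟨hj, -⟩, hk, -⟩ := hP.mem_box _ _ _ h
    obtain ⟨a, rfl⟩ := Nat.exists_eq_add_of_le' ha
    rcases hk.eq_or_lt with rfl | hk
    · exact Or.inl ⟨⟨a, han⟩, rfl, ⟨hj, le_bottomRow h⟩, rfl⟩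
    · obtain ⟨k, rfl⟩ := Nat.exists_eq_add_of_lt hk
      exact Or.inr ⟨1 + k, ⟨h, by omega⟩, rfl⟩

theorem removeBottom_addBottom (hP : IsBoxed n m P) {N : ℕ} (r : Fin N → ℕ) :
    removeBottom (addBottom r P) = P := by
  ext ⟨a, j, k⟩
  rw [mem_removeBottom, mem_addBottom]
  constructor
  · rintro ⟨⟨-, -, -, h0⟩ | ⟨k', h, hk'⟩, hk⟩
    · omega
    · rwa [Nat.succ_injective hk']
  · intro h
    have hk := (hP.mem_box _ _ _ h).2.2.1
    exact ⟨Or.inr ⟨k, h, rfl⟩, hk⟩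

theorem card_addBottom (hP : IsBoxed n m P) {N : ℕ} (r : Fin N → ℕ) :
    (addBottom r P).card = ∑ i, r i + P.card := by
  rw [addBottom, card_union_of_disjoint, card_flatLayer, card_map]
  refine disjoint_left.2 fun ⟨a, j, k⟩ h h' => ?_
  obtain ⟨-, -, -, rfl⟩ := mem_flatLayer.1 h
  obtain ⟨⟨a', j', k'⟩, hmem, heq⟩ := mem_map.1 h'
  have := (hP.mem_box _ _ _ hmem).2.2.1
  simp only [raise_apply, Prod.mk.injEq] at heq
  omega

theorem exists_le_of_mem_addBottom (hP : IsBoxed n m P) {r : Fin (n + 1) → ℕ}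
    (hr : ∀ i : Fin n, bottomRow n P i ≤ r i.castSucc) {a j k : ℕ} (h : (a, j, k) ∈ addBottom r P) :
    ∃ i : Fin (n + 1), a = i + 1 ∧ j ≤ r i := by
  obtain ⟨i, rfl, hj, -⟩ | ⟨k, hmem, -⟩ := mem_addBottom.1 h
  · exact ⟨i, rfl, hj.2⟩
  · obtain ⟨⟨ha, han⟩, ⟨hj, -⟩, hk, -⟩ := hP.mem_box _ _ _ hmem
    obtain ⟨a, rfl⟩ := Nat.exists_eq_add_of_le' ha
    have hbot := hP.down _ _ _ hmem _ _ _ ha le_rfl hj le_rfl le_rfl hk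
    exact ⟨Fin.castSucc ⟨a, han⟩, rfl, (le_bottomRow (i := ⟨a, han⟩) hbot).trans (hr _)⟩

protected theorem addBottom (hP : IsBoxed n m P) {r : Fin (n + 1) → ℕ} (hm : ∀ i, r i ≤ m)
    (hr : ∀ i, bottomRow n P i ∈ Icc (r i.succ) (r i.castSucc)) :
    IsBoxed (n + 1) m (addBottom r P) := by
  simp only [mem_Icc] at hr
  have hanti : Antitone r := Fin.antitone_iff_succ_le.2 fun i => (hr i).1.trans (hr i).2
  constructor
  · intro a j k h
    obtain ⟨i, rfl, hj, rfl⟩ | ⟨k, hmem, rfl⟩ := mem_addBottom.1 h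
    · have := hm i
      omega
    · have := hP.mem_box _ _ _ hmem
      omega
  · intro a j k h a' j' k' ha ha' hj hj' hk hk'
    obtain ⟨i, rfl, hji⟩ := hP.exists_le_of_mem_addBottom (fun i => (hr i).2) h
    rw [mem_addBottom] at h ⊢
    rcases hk.eq_or_lt with rfl | hk
    · obtain ⟨a', rfl⟩ := Nat.exists_eq_add_of_le' ha
      refine Or.inl ⟨⟨a', by omega⟩, rfl, ⟨hj, (hj'.trans hji).trans (hanti ?_)⟩, rfl⟩
      exact Fin.le_def.2 (Nat.le_of_succ_le_succ ha')
    · obtain ⟨-, -, -, rfl⟩ | ⟨k, hmem, rfl⟩ := h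
      · omega
      · refine Or.inr ⟨k' - 1, ?_, by omega⟩
        exact hP.down _ _ _ hmem _ _ _ ha ha' hj hj' (by omega) (by omega)
  · intro a j k ha h
    refine mem_addBottom.2 (Or.inr ⟨k, ?_, rfl⟩)
    obtain ⟨i, hi, ⟨hj, hj'⟩, rfl⟩ | ⟨k, hmem, rfl⟩ := mem_addBottom.1 h
    · have hi0 : i ≠ 0 := by
        rintro rfl
        rw [Fin.val_zero] at hi
        omega
      obtain ⟨i, rfl⟩ := Fin.exists_succ_eq.2 hi0
      obtain rfl : a = i + 1 := by simpa using hi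
      exact (hP.mem_iff_le_bottomRow hj).2 (hj'.trans (hr i).1)
    · exact hP.strict _ _ _ ha hmem

theorem bottomRow_addBottom (hP : IsBoxed n m P) {N : ℕ} (r : Fin N → ℕ) :
    bottomRow N (addBottom r P) = r := by
  have hmem {i : Fin N} {j : ℕ} : ((i : ℕ) + 1, j, 1) ∈ addBottom r P ↔ 1 ≤ j ∧ j ≤ r i := by
    rw [mem_addBottom]
    constructor
    · rintro (⟨i', hi, hj, -⟩ | ⟨k, h, hk⟩)
      · rwa [Fin.ext (Nat.succ_injective hi)]
      · have := hP.mem_box _ _ _ h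
        omega
    · exact fun hj => Or.inl ⟨i, rfl, hj, rfl⟩
  ext i
  refine le_antisymm (Finset.sup_le fun p hp => ?_) ?_
  · obtain ⟨a, j, k⟩ := p
    obtain ⟨h, rfl, rfl⟩ := mem_filter.1 hp
    exact (hmem.1 h).2
  · rcases Nat.eq_zero_or_pos (r i) with h0 | hpos
    · omega
    · exact le_bottomRow (hmem.2 ⟨hpos, le_rfl⟩)

end IsBoxed

end PlanePartitions

section GeneratingFunction

open Finset Polynomial

variable {R : Type*} [CommRing R] {n m : ℕ}

/-- The generating function of the column strict plane partitions in the box with sides `n`, `m`,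
`n` whose bottom layer has row lengths `r`. -/
noncomputable def fixedBottomSum (q : R) (m : ℕ) (r : Fin n → ℕ) : R :=
  ∑ P ∈ boxedPartitions n m with bottomRow n P = r, q ^ P.card

theorem boxedPartitions_eq_singleton (h : n = 0 ∨ m = 0) : boxedPartitions n m = {∅} := by
  ext P
  rw [mem_boxedPartitions, mem_singleton]
  refine ⟨fun hP => eq_empty_of_forall_notMem fun p hp => ?_, ?_⟩
  · have := hP.mem_box _ _ _ hp
    omega
  · rintro rfl
    constructor <;> simp only [notMem_empty, false_implies, implies_true]

theorem fixedBottomSum_zero (q : R) (m : ℕ) (r : Fin 0 → ℕ) : fixedBottomSum q m r = 1 := by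
  rw [fixedBottomSum, filter_true_of_mem fun P _ => Subsingleton.elim _ _,
    boxedPartitions_eq_singleton (Or.inl rfl)]
  simp

theorem fixedBottomSum_succ (q : R) {r : Fin (n + 1) → ℕ} (hm : ∀ i, r i ≤ m) :
    fixedBottomSum q m r = q ^ (∑ i, r i) *
      ∑ k ∈ Fintype.piFinset fun i : Fin n => Icc (r i.succ) (r i.castSucc),
        fixedBottomSum q m k := by
  simp_rw [fixedBottomSum, sum_fiberwise_eq_sum_filter, mul_sum, Fintype.mem_piFinset]
  refine sum_bij' (fun P _ => removeBottom P) (fun P _ => addBottom r P) ?_ ?_ ?_ ?_ ?_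
  all_goals simp only [mem_filter, mem_boxedPartitions]
  · rintro P ⟨hP, rfl⟩
    exact ⟨hP.removeBottom, hP.bottomRow_removeBottom_mem_Icc⟩
  · rintro P ⟨hP, hr⟩
    exact ⟨hP.addBottom hm hr, hP.bottomRow_addBottom r⟩
  · rintro P ⟨hP, rfl⟩
    exact hP.addBottom_removeBottom
  · rintro P ⟨hP, -⟩
    exact hP.removeBottom_addBottom r
  · rintro P ⟨hP, rfl⟩
    rw [← pow_add]
    congr 1
    conv_lhs => rw [← hP.addBottom_removeBottom, hP.removeBottom.card_addBottom]

theorem exists_fixedBottomSum_mul_eq_alternant [IsDomain R] {q : R} (hq : q ≠ 0)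
    (hq' : ∀ k, 0 < k → q ^ k ≠ 1) (n : ℕ) :
    ∃ d ≠ 0, ∀ m (r : Fin n → ℕ), Antitone r → (∀ i, r i ≤ m) →
      fixedBottomSum q m r * d = alternant (principalPoint q n) (addStaircase r) := by
  induction n with
  | zero => exact ⟨1, one_ne_zero, fun m r _ _ => by simp [fixedBottomSum_zero, alternant]⟩
  | succ n ih =>
    obtain ⟨d, hd, hsum⟩ := ih
    refine ⟨d * ((∏ i : Fin (n + 1), q ^ (i.rev : ℕ)) * ∏ j : Fin n, (1 - q ^ (j + 1 : ℕ))),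
      ?_, fun m r hr hm => ?_⟩
    · refine mul_ne_zero hd (mul_ne_zero (prod_ne_zero_iff.2 fun i _ => pow_ne_zero _ hq) ?_)
      exact prod_ne_zero_iff.2 fun j _ => sub_ne_zero.2 (hq' _ j.succ_pos).symm
    · rw [fixedBottomSum_succ q hm, ← sum_alternant_interlacing q hr]
      have hbranch : (∑ k ∈ Fintype.piFinset fun i : Fin n => Icc (r i.succ) (r i.castSucc),
          fixedBottomSum q m k) * d =
            ∑ k ∈ Fintype.piFinset fun i : Fin n => Icc (r i.succ) (r i.castSucc),
              alternant (principalPoint q n) (addStaircase k) := by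
        rw [sum_mul]
        refine sum_congr rfl fun k hk => ?_
        simp only [Fintype.mem_piFinset, mem_Icc] at hk
        refine hsum m k (fun i i' hi => ?_) fun i => (hk i).2.trans (hm _)
        rcases hi.eq_or_lt with rfl | hlt
        · rfl
        · exact (hk i').2.trans ((hr (Fin.succ_le_castSucc_iff.2 hlt)).trans (hk i).1)
      simp_rw [addStaircase, pow_add, prod_mul_distrib, prod_pow_eq_pow_sum]
      rw [← hbranch]
      ring

theorem addStaircase_mem_strictSeqs {r : Fin n → ℕ} (hr : Antitone r) (hm : ∀ i, r i ≤ m) :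
    addStaircase r ∈ strictSeqs n (m + n) :=
  mem_strictSeqs.2 ⟨fun i => add_lt_add_of_le_of_lt (hm i) i.rev.isLt,
    fun _ _ hij => add_lt_add_of_le_of_lt (hr hij.le) (Fin.rev_lt_rev.2 hij)⟩

theorem exists_addStaircase_eq {l : Fin n → ℕ} (hl : l ∈ strictSeqs n (m + n)) :
    ∃ r : Fin n → ℕ, Antitone r ∧ (∀ i, r i ≤ m) ∧ addStaircase r = l := by
  obtain ⟨hlt, hanti⟩ := mem_strictSeqs.1 hl
  rcases n with _ | n
  · exact ⟨l, Subsingleton.antitone _, finZeroElim, Subsingleton.elim _ _⟩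
  have hstep (i : Fin n) : l i.succ < l i.castSucc ∧ (i.castSucc.rev : ℕ) = i.succ.rev + 1 :=
    ⟨hanti Fin.castSucc_lt_succ, by rw [Fin.rev_castSucc, Fin.rev_succ]; rfl⟩
  have hrev (i : Fin (n + 1)) : (i.rev : ℕ) ≤ l i := by
    induction i using Fin.reverseInduction with
    | last => simp
    | cast i ih => have := hstep i; omega
  have hdiff : Antitone fun i => l i - i.rev := Fin.antitone_iff_succ_le.2 fun i => by
    have := hstep i
    omega
  refine ⟨_, hdiff, fun i => (hdiff (Fin.zero_le i)).trans ?_,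
    funext fun i => Nat.sub_add_cancel (hrev i)⟩
  have := hlt 0
  simp only [Fin.rev_zero, Fin.val_last]
  omega

theorem exists_sum_boxedPartitions_mul_eq_minorSum [IsDomain R] {q : R} (hq : q ≠ 0)
    (hq' : ∀ k, 0 < k → q ^ k ≠ 1) (n : ℕ) :
    ∃ d ≠ 0, ∀ m, (∑ P ∈ boxedPartitions n m, q ^ P.card) * d =
      minorSum (principalPoint q n) (m + n) := by
  obtain ⟨d, hd, hsum⟩ := exists_fixedBottomSum_mul_eq_alternant hq hq' n
  refine ⟨d, hd, fun m => ?_⟩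
  rw [minorSum, ← sum_fiberwise_of_maps_to (g := fun P => addStaircase (bottomRow n P)) fun P hP =>
    addStaircase_mem_strictSeqs (mem_boxedPartitions.1 hP).bottomRow_antitone
      (mem_boxedPartitions.1 hP).bottomRow_le,
    sum_mul]
  refine sum_congr rfl fun l hl => ?_
  obtain ⟨r, hr, hm, rfl⟩ := exists_addStaircase_eq hl
  rw [← hsum m r hr hm, fixedBottomSum]
  congr 2
  ext P
  simp [addStaircase, funext_iff]

theorem littlewoodDenominator_principalPoint_ne_zero [IsDomain R] {q : R}
    (hq : ∀ k, 0 < k → q ^ k ≠ 1) (n : ℕ) : littlewoodDenominator (principalPoint q n) ≠ 0 := by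
  refine mul_ne_zero (prod_ne_zero_iff.2 fun i _ => sub_ne_zero.2 (hq _ i.succ_pos))
    (prod_ne_zero_iff.2 fun i _ => prod_ne_zero_iff.2 fun j _ => sub_ne_zero.2 ?_)
  rw [principalPoint, principalPoint, ← pow_add]
  exact hq _ (by omega)

theorem sum_boxedPartitions_mul_pairProd_zero_of_field {K : Type*} [Field K] {q : K} (hq : q ≠ 0)
    (hq' : ∀ k, 0 < k → q ^ k ≠ 1) (n m : ℕ) :
    (∑ P ∈ boxedPartitions n m, q ^ P.card) * pairProd q n 0 = pairProd q n m := by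
  obtain ⟨d, hd, hsum⟩ := exists_sum_boxedPartitions_mul_eq_minorSum hq hq' n
  obtain ⟨c, hc⟩ := exists_weylNumerator_principalPoint_eq_mul q n
  set L := littlewoodDenominator (principalPoint q n)
  have hL : L ≠ 0 := littlewoodDenominator_principalPoint_ne_zero hq' n
  have hadd (i : Fin n) : 1 + principalPoint q n i ≠ 0 := fun h => by
    refine hq' ((i + 1) * 2) (by omega) ?_
    rw [pow_mul, show q ^ (i + 1 : ℕ) = -1 from (neg_eq_of_add_eq_zero_right h).symm, neg_one_sq]
  have hprod (m : ℕ) : (∑ P ∈ boxedPartitions n m, q ^ P.card) * (d * L) = c * pairProd q n m := by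
    rw [← mul_assoc, hsum, ← hc]
    exact minorSum_mul_littlewoodDenominator (fun i => pow_ne_zero _ hq) hadd _
  have hzero : d * L = c * pairProd q n 0 := by
    rw [← hprod 0, boxedPartitions_eq_singleton (Or.inr rfl)]
    simp
  have hc0 : c ≠ 0 := left_ne_zero_of_mul (hzero ▸ mul_ne_zero hd hL)
  refine mul_left_cancel₀ hc0 ?_
  rw [← hprod, hzero]
  ring

theorem map_pairProd {S : Type*} [CommRing S] (f : R →+* S) (q : R) (n m : ℕ) :
    f (pairProd q n m) = pairProd (f q) n m := by
  simp only [pairProd, map_prod, map_sub, map_one, map_pow]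

theorem sum_boxedPartitions_mul_pairProd_zero (q : R) (n m : ℕ) :
    (∑ P ∈ boxedPartitions n m, q ^ P.card) * pairProd q n 0 = pairProd q n m := by
  have huniv : (∑ P ∈ boxedPartitions n m, (X : ℤ[X]) ^ P.card) * pairProd X n 0 =
      pairProd X n m := by
    have hinj := IsFractionRing.injective ℤ[X] (FractionRing ℤ[X])
    have hX (k : ℕ) (hk : 0 < k) : (X : ℤ[X]) ^ k ≠ 1 := fun h => by
      simpa [hk.ne'] using congrArg natDegree h
    apply hinj
    rw [map_mul, map_sum, map_pairProd, map_pairProd]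
    simp_rw [map_pow]
    refine sum_boxedPartitions_mul_pairProd_zero_of_field ?_ (fun k hk => ?_) n m
    · rw [map_ne_zero_iff _ hinj]
      exact X_ne_zero
    · rw [← map_pow, ← map_one (algebraMap ℤ[X] _), hinj.ne_iff]
      exact hX k hk
  have h := congrArg (eval₂RingHom (Int.castRingHom R) q) huniv
  simpa only [map_mul, map_sum, map_pow, map_pairProd, coe_eval₂RingHom, eval₂_X] using h

theorem prod_Icc_prod_Icc_eq {M : Type*} [CommMonoid M] (f : ℕ → ℕ → M) (n : ℕ) :
    ∏ i ∈ Icc 1 n, ∏ j ∈ Icc i n, f i j = ∏ i : Fin n, ∏ j ∈ Ici i, f (i + 1) (j + 1) := by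
  have prod_Icc_add_one (g : ℕ → M) (a : ℕ) :
      ∏ i ∈ Icc (a + 1) n, g i = ∏ i ∈ Ico a n, g (i + 1) := by
    rw [prod_Ico_add', Ico_add_one_right_eq_Icc]
  rw [prod_Icc_add_one _ 0, Nat.Ico_zero_eq_range, ← Fin.prod_univ_eq_prod_range]
  refine prod_congr rfl fun i _ => ?_
  rw [prod_Icc_add_one, ← Fin.map_valEmbedding_Ici, prod_map]
  rfl

end GeneratingFunction

theorem bender_knuth_general {k : Type*} [Field k] (m n : ℕ) :
    ∑ P ∈ (ppBox n m n).powerset.filter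
        (fun P => IsPlanePartition P ∧ IsColumnStrict P),
      (PowerSeries.X : PowerSeries k) ^ P.card =
    ∏ i ∈ Finset.Icc 1 n, ∏ j ∈ Finset.Icc i n,
      (1 - (PowerSeries.X : PowerSeries k) ^ (m + i + j - 1)) *
        (1 - (PowerSeries.X : PowerSeries k) ^ (i + j - 1))⁻¹ := by
  have hinv (a b : ℕ) : (1 - (PowerSeries.X : PowerSeries k) ^ (0 + a + b + 1)) *
      (1 - PowerSeries.X ^ (a + 1 + (b + 1) - 1))⁻¹ = 1 := by
    rw [zero_add, show a + 1 + (b + 1) - 1 = a + b + 1 by omega]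
    exact PowerSeries.mul_inv_cancel _ (by simp)
  have hexp (a b : ℕ) : m + (a + 1) + (b + 1) - 1 = m + a + b + 1 := by omega
  rw [prod_Icc_prod_Icc_eq]
  simp_rw [Finset.prod_mul_distrib, hexp]
  change _ = pairProd _ n m * _
  rw [← sum_boxedPartitions_mul_pairProd_zero, mul_assoc, pairProd]
  simp_rw [← Finset.prod_mul_distrib, hinv, Finset.prod_const_one, mul_one]
  rfl

/-- **The Bender–Knuth conjecture**: the generating function for column strict plane
partitions with `1 ≤ i ≤ n`, `1 ≤ j ≤ m`, `1 ≤ k ≤ n` is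
`∏_{1≤i≤j≤n} (1-q^{m+i+j-1})/(1-q^{i+j-1})` in `ℚ[[q]]`. -/
theorem bender_knuth (m n : ℕ) (hm : 0 < m) (hn : 0 < n) :
    ∑ P ∈ (ppBox n m n).powerset.filter
        (fun P => IsPlanePartition P ∧ IsColumnStrict P),
      (PowerSeries.X : PowerSeries ℚ) ^ P.card =
    ∏ i ∈ Finset.Icc 1 n, ∏ j ∈ Finset.Icc i n,
      (1 - (PowerSeries.X : PowerSeries ℚ) ^ (m + i + j - 1)) *
        (1 - (PowerSeries.X : PowerSeries ℚ) ^ (i + j - 1))⁻¹ :=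
  bender_knuth_general m n
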